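/- Let p > 3 and h ∈ (1, p−1). For every c > 0 there exists L₀ ≥ 1 such that for all L ≥ L₀ and all m ≥ 1: ∫_0^{m−1} ∫_{−β}^{β} (L + β − α)^{1−p} ⟨α⟩^{−h} (cosh(m−β))^{−1/2} dα dβ ≤ c ⟨m⟩^{−h}. -/

import Mathlib

open MeasureTheory intervalIntegral

/-- The Japanese bracket `⟨x⟩ = (1 + x²)^{1/2}`. -/
noncomputable def jap (x : ℝ) : ℝ := Real.sqrt (1 + x ^ 2)

/-!
Every factor of the integrand is compared with a power `⟨·⟩^{-h}`. Because `1 - p + h < 0`, the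
factor `(L + β - α)^{1-p}` is at most `L^{1-p+h} ⟨β - α⟩^{-h}`, and `cosh^{-1/2}` decays faster than
any power. Since `⟨·⟩^{-h}` is integrable, its convolution with itself is at most
a multiple of `⟨·⟩^{-h}`; using this in `α` and then in `β` bounds the double integral by a multiple
of `L^{1-p+h} ⟨m⟩^{-h}`, and `L^{1-p+h} → 0` as `L → ∞`.
-/

lemma jap_pos (x : ℝ) : 0 < jap x := Real.sqrt_pos.2 (by positivity)

lemma jap_rpow_nonneg (x s : ℝ) : 0 ≤ jap x ^ s := Real.rpow_nonneg (jap_pos x).le s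

lemma abs_le_jap (x : ℝ) : |x| ≤ jap x := Real.abs_le_sqrt (by linarith)

lemma jap_le_one_add_abs (x : ℝ) : jap x ≤ 1 + |x| := by
  simpa only [jap, Real.norm_eq_abs, sq_abs] using sqrt_one_add_norm_sq_le x

lemma jap_add_le (x y : ℝ) : jap (x + y) ≤ jap x + jap y := by
  have hx : jap x ^ 2 = 1 + x ^ 2 := Real.sq_sqrt (by positivity)
  have hy : jap y ^ 2 = 1 + y ^ 2 := Real.sq_sqrt (by positivity)
  have hxy : x * y ≤ jap x * jap y := by
    calc x * y ≤ |x| * |y| := by rw [← abs_mul]; exact le_abs_self _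
      _ ≤ jap x * jap y :=
        mul_le_mul (abs_le_jap x) (abs_le_jap y) (abs_nonneg y) (jap_pos x).le
  exact Real.sqrt_le_iff.2 ⟨(add_pos (jap_pos x) (jap_pos y)).le, by nlinarith only [hx, hy, hxy]⟩

lemma integrable_jap_rpow_neg {h : ℝ} (hh : 1 < h) : Integrable fun x ↦ jap x ^ (-h) := by
  have hi := integrable_rpow_neg_one_add_norm_sq (E := ℝ) (μ := volume) (r := h) (by simpa using hh)
  refine hi.congr (.of_forall fun x ↦ ?_)
  simp only [jap, Real.norm_eq_abs, sq_abs]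
  rw [Real.sqrt_eq_rpow, ← Real.rpow_mul (by positivity), one_div_mul_eq_div]

lemma rpow_neg_mul_rpow_neg_le {x y z h : ℝ} (hx : 0 < x) (hy : 0 < y) (hz : 0 < z)
    (hh : 0 ≤ h) (hxyz : x ≤ y + z) :
    y ^ (-h) * z ^ (-h) ≤ 2 ^ h * x ^ (-h) * (y ^ (-h) + z ^ (-h)) := by
  wlog hyz : y ≤ z generalizing y z
  · rw [mul_comm, add_comm (y ^ (-h))]
    exact this hz hy (by linarith) (le_of_not_ge hyz)
  have hz_large : z ^ (-h) ≤ 2 ^ h * x ^ (-h) := by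
    calc z ^ (-h) ≤ (x / 2) ^ (-h) :=
          Real.rpow_le_rpow_of_nonpos (by positivity) (by linarith) (by linarith)
      _ = 2 ^ h * x ^ (-h) := by
          rw [Real.div_rpow hx.le zero_le_two, Real.rpow_neg zero_le_two, div_inv_eq_mul, mul_comm]
  calc y ^ (-h) * z ^ (-h) ≤ (y ^ (-h) + z ^ (-h)) * (2 ^ h * x ^ (-h)) :=
        mul_le_mul (le_add_of_nonneg_right (by positivity)) hz_large (by positivity) (by positivity)
    _ = 2 ^ h * x ^ (-h) * (y ^ (-h) + z ^ (-h)) := mul_comm _ _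

/-- The constant `2^{h+1} ∫ ⟨x⟩^{-h} dx`, for which the convolution of `⟨·⟩^{-h}` with itself is
bounded by `japConvConst h * ⟨·⟩^{-h}` when `h > 1`. -/
noncomputable def japConvConst (h : ℝ) : ℝ := 2 ^ (h + 1) * ∫ x, jap x ^ (-h)

lemma japConvConst_nonneg (h : ℝ) : 0 ≤ japConvConst h :=
  mul_nonneg (by positivity) (integral_nonneg fun x ↦ jap_rpow_nonneg x (-h))

lemma jap_sub_rpow_neg_mul_le {h : ℝ} (hh : 0 ≤ h) (b a : ℝ) :
    jap (b - a) ^ (-h) * jap a ^ (-h) ≤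
      2 ^ h * jap b ^ (-h) * (jap (b - a) ^ (-h) + jap a ^ (-h)) :=
  rpow_neg_mul_rpow_neg_le (jap_pos _) (jap_pos _) (jap_pos _) hh
    (by simpa only [sub_add_cancel] using jap_add_le (b - a) a)

lemma intervalIntegral_le_of_le_jap_conv {h : ℝ} (hh : 1 < h) {f : ℝ → ℝ} {A b u v : ℝ}
    (hA : 0 ≤ A) (huv : u ≤ v) (hf : ∀ a ∈ Set.Icc u v, 0 ≤ f a)
    (hfA : ∀ a ∈ Set.Icc u v, f a ≤ A * (jap (b - a) ^ (-h) * jap a ^ (-h))) :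
    ∫ a in u..v, f a ≤ A * (japConvConst h * jap b ^ (-h)) := by
  set g : ℝ → ℝ := fun a ↦ A * (2 ^ h * jap b ^ (-h) * (jap (b - a) ^ (-h) + jap a ^ (-h)))
  have hi := integrable_jap_rpow_neg hh
  have hg : Integrable g := (((hi.comp_sub_left b).add hi).const_mul _).const_mul _
  have hg_nonneg (a : ℝ) : 0 ≤ g a := by
    have := jap_pos b; have := jap_pos (b - a); have := jap_pos a
    positivity
  have hfg (a : ℝ) (ha : a ∈ Set.Icc u v) : f a ≤ g a :=
    (hfA a ha).trans (mul_le_mul_of_nonneg_left (jap_sub_rpow_neg_mul_le (by linarith) b a) hA)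
  calc ∫ a in u..v, f a = ∫ a in Set.Icc u v, f a := by
        rw [integral_of_le huv, integral_Icc_eq_integral_Ioc]
    _ ≤ ∫ a in Set.Icc u v, g a :=
        integral_mono_of_nonneg (ae_restrict_of_forall_mem measurableSet_Icc hf) hg.integrableOn
          (ae_restrict_of_forall_mem measurableSet_Icc hfg)
    _ ≤ ∫ a, g a := setIntegral_le_integral hg (.of_forall hg_nonneg)
    _ = A * (2 ^ h * jap b ^ (-h) * ((∫ a, jap a ^ (-h)) + ∫ a, jap a ^ (-h))) := by
        rw [MeasureTheory.integral_const_mul, MeasureTheory.integral_const_mul,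
          MeasureTheory.integral_add (hi.comp_sub_left b) hi,
          integral_sub_left_eq_self (fun x ↦ jap x ^ (-h)) volume b]
    _ = A * (japConvConst h * jap b ^ (-h)) := by
        rw [japConvConst, Real.rpow_add_one two_ne_zero]
        ring

lemma jap_rpow_le_cosh_rpow {h s : ℝ} (hh : 0 < h) (hs : 0 < s) (x : ℝ) :
    jap x ^ h ≤ (1 + h / s) ^ h * 2 ^ s * Real.cosh x ^ s := by
  have h_exp : jap x ≤ (1 + h / s) * Real.exp (s / h * |x|) :=
    calc jap x ≤ 1 + |x| := jap_le_one_add_abs x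
      _ ≤ 1 + |x| + (s / h * |x| + h / s) := le_add_of_nonneg_right (by positivity)
      _ = (1 + h / s) * (s / h * |x| + 1) := by field_simp; ring
      _ ≤ (1 + h / s) * Real.exp (s / h * |x|) := by gcongr; exact Real.add_one_le_exp _
  have h_cosh : Real.exp |x| ≤ 2 * Real.cosh x := by
    rw [Real.cosh_eq, mul_div_cancel₀ _ two_ne_zero]
    exact Real.exp_abs_le x
  calc jap x ^ h ≤ ((1 + h / s) * Real.exp (s / h * |x|)) ^ h :=
        Real.rpow_le_rpow (jap_pos x).le h_exp hh.le
    _ = (1 + h / s) ^ h * Real.exp |x| ^ s := by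
        rw [Real.mul_rpow (by positivity) (by positivity), ← Real.exp_mul, ← Real.exp_mul]
        congr 2
        field_simp
    _ ≤ (1 + h / s) ^ h * (2 * Real.cosh x) ^ s := by gcongr
    _ = (1 + h / s) ^ h * 2 ^ s * Real.cosh x ^ s := by
        rw [Real.mul_rpow zero_le_two (Real.cosh_pos x).le, mul_assoc]

lemma cosh_rpow_neg_le {h s : ℝ} (hh : 0 < h) (hs : 0 < s) (x : ℝ) :
    Real.cosh x ^ (-s) ≤ (1 + h / s) ^ h * 2 ^ s * jap x ^ (-h) := by
  have hj := jap_pos x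
  have hc := Real.cosh_pos x
  rw [Real.rpow_neg hc.le, Real.rpow_neg hj.le, ← div_eq_mul_inv, inv_eq_one_div,
    div_le_div_iff₀ (by positivity) (by positivity), one_mul]
  exact jap_rpow_le_cosh_rpow hh hs x

lemma add_rpow_le_rpow_mul_jap_rpow_neg {L x r h : ℝ} (hL : 1 ≤ L) (hx : 0 ≤ x) (hh : 0 ≤ h)
    (hr : r + h ≤ 0) : (L + x) ^ r ≤ L ^ (r + h) * jap x ^ (-h) := by
  have hjap : jap x ≤ L + x := by
    have := jap_le_one_add_abs x
    rw [abs_of_nonneg hx] at this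
    linarith
  calc (L + x) ^ r = (L + x) ^ (r + h) * (L + x) ^ (-h) := by
        rw [← Real.rpow_add (by linarith), add_neg_cancel_right]
    _ ≤ L ^ (r + h) * jap x ^ (-h) :=
        mul_le_mul (Real.rpow_le_rpow_of_nonpos (by linarith) (by linarith) hr)
          (Real.rpow_le_rpow_of_nonpos (jap_pos x) hjap (by linarith))
          (by positivity) (by positivity)

section IteratedIntegral

variable {r h s L : ℝ}

lemma integral_rpow_mul_jap_rpow_neg_nonneg {u β : ℝ} (hL : 0 ≤ L) (huβ : u ≤ β) :
    0 ≤ ∫ α in u..β, (L + β - α) ^ r * jap α ^ (-h) :=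
  integral_nonneg huβ fun α hα ↦
    mul_nonneg (Real.rpow_nonneg (by linarith [hα.2]) r) (jap_rpow_nonneg α (-h))

lemma integral_rpow_mul_jap_rpow_neg_le {u β : ℝ} (hh : 1 < h) (hr : r + h ≤ 0) (hL : 1 ≤ L)
    (huβ : u ≤ β) :
    ∫ α in u..β, (L + β - α) ^ r * jap α ^ (-h) ≤
      L ^ (r + h) * (japConvConst h * jap β ^ (-h)) := by
  refine intervalIntegral_le_of_le_jap_conv hh (by positivity) huβ (fun α hα ↦ ?_) fun α hα ↦ ?_
  · exact mul_nonneg (Real.rpow_nonneg (by linarith [hα.2]) r) (jap_rpow_nonneg α (-h))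
  · rw [← mul_assoc, add_sub_assoc]
    exact mul_le_mul_of_nonneg_right
      (add_rpow_le_rpow_mul_jap_rpow_neg hL (sub_nonneg.2 hα.2) (by linarith) hr)
      (jap_rpow_nonneg α (-h))

lemma integral_integral_rpow_mul_jap_mul_cosh_le (hh : 1 < h) (hr : r + h ≤ 0) (hs : 0 < s)
    (hL : 1 ≤ L) (m : ℝ) {b : ℝ} (hb : 0 ≤ b) :
    ∫ β in (0 : ℝ)..b, ∫ α in (-β)..β,
        (L + β - α) ^ r * jap α ^ (-h) * Real.cosh (m - β) ^ (-s) ≤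
      (1 + h / s) ^ h * 2 ^ s * japConvConst h ^ 2 * L ^ (r + h) * jap m ^ (-h) := by
  set C : ℝ := (1 + h / s) ^ h * 2 ^ s
  have hK := japConvConst_nonneg h
  have hcosh (β : ℝ) : 0 ≤ Real.cosh (m - β) ^ (-s) := Real.rpow_nonneg (Real.cosh_pos _).le _
  have hinner (β : ℝ) (hβ : 0 ≤ β) :
      (∫ α in (-β)..β, (L + β - α) ^ r * jap α ^ (-h)) * Real.cosh (m - β) ^ (-s) ≤
        C * japConvConst h * L ^ (r + h) * (jap (m - β) ^ (-h) * jap β ^ (-h)) := by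
    have hjap := jap_rpow_nonneg β (-h)
    calc (∫ α in (-β)..β, (L + β - α) ^ r * jap α ^ (-h)) * Real.cosh (m - β) ^ (-s)
        ≤ L ^ (r + h) * (japConvConst h * jap β ^ (-h)) * (C * jap (m - β) ^ (-h)) :=
          mul_le_mul (integral_rpow_mul_jap_rpow_neg_le hh hr hL (by linarith))
            (cosh_rpow_neg_le (by linarith) hs _) (hcosh β) (by positivity)
      _ = C * japConvConst h * L ^ (r + h) * (jap (m - β) ^ (-h) * jap β ^ (-h)) := by ring
  simp_rw [intervalIntegral.integral_mul_const]
  calc ∫ β in (0 : ℝ)..b,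
        (∫ α in (-β)..β, (L + β - α) ^ r * jap α ^ (-h)) * Real.cosh (m - β) ^ (-s)
      ≤ C * japConvConst h * L ^ (r + h) * (japConvConst h * jap m ^ (-h)) :=
        intervalIntegral_le_of_le_jap_conv hh (by positivity) hb
          (fun β hβ ↦ mul_nonneg
            (integral_rpow_mul_jap_rpow_neg_nonneg (by linarith) (by linarith [hβ.1])) (hcosh β))
          fun β hβ ↦ hinner β hβ.1
    _ = C * japConvConst h ^ 2 * L ^ (r + h) * jap m ^ (-h) := by ring

end IteratedIntegral

theorem interior_region_estimate_one_general {p h s : ℝ} (hh : 1 < h) (hp : h < p - 1)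
    (hs : 0 < s) {c : ℝ} (hc : 0 < c) :
    ∃ L₀ : ℝ, 1 ≤ L₀ ∧ ∀ L : ℝ, L₀ ≤ L → ∀ m b : ℝ, 0 ≤ b →
      (∫ β in (0 : ℝ)..b, ∫ α in (-β)..β,
        (L + β - α) ^ (1 - p) * jap α ^ (-h) * Real.cosh (m - β) ^ (-s))
      ≤ c * jap m ^ (-h) := by
  set M : ℝ := (1 + h / s) ^ h * 2 ^ s * japConvConst h ^ 2
  have h_lim : Filter.Tendsto (fun L : ℝ ↦ M * L ^ (1 - p + h)) Filter.atTop (nhds 0) := by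
    have := (tendsto_rpow_neg_atTop (y := p - 1 - h) (by linarith)).const_mul M
    rwa [mul_zero, show -(p - 1 - h) = 1 - p + h by ring] at this
  obtain ⟨L₁, hL₁⟩ := Filter.eventually_atTop.1 (h_lim.eventually_lt_const hc)
  refine ⟨max 1 L₁, le_max_left _ _, fun L hL m b hb ↦ ?_⟩
  obtain ⟨hL_one, hL_large⟩ := max_le_iff.1 hL
  calc _ ≤ M * L ^ (1 - p + h) * jap m ^ (-h) :=
        integral_integral_rpow_mul_jap_mul_cosh_le hh (by linarith) hs hL_one m hb
    _ ≤ c * jap m ^ (-h) :=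
        mul_le_mul_of_nonneg_right (hL₁ L hL_large).le (jap_rpow_nonneg m (-h))

theorem interior_region_estimate_one (p h : ℝ) (hp : 3 < p) (hh1 : 1 < h) (hh2 : h < p - 1) :
    ∀ c : ℝ, 0 < c → ∃ L₀ : ℝ, 1 ≤ L₀ ∧ ∀ L : ℝ, L₀ ≤ L → ∀ m : ℝ, 1 ≤ m →
      (∫ β in (0 : ℝ)..(m - 1), ∫ α in (-β)..β,
        (L + β - α) ^ (1 - p) * jap α ^ (-h) * Real.cosh (m - β) ^ (-(1 / 2) : ℝ))
      ≤ c * jap m ^ (-h) := by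
  intro c hc
  obtain ⟨L₀, hL₀, hbound⟩ := interior_region_estimate_one_general hh1 hh2 one_half_pos hc
  exact ⟨L₀, hL₀, fun L hL m hm ↦ hbound L hL m (m - 1) (sub_nonneg.2 hm)⟩
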